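/- Let ℓ be an odd prime different from char(K) and suppose ζ_ℓ ∉ K but ζ_ℓ ∈ Γ. Let τ ≥ 1 be the largest integer such that ζ_{ℓ^τ} ∈ Γ ∩ K(W_ℓ, ζ_ℓ), and let ε be the largest integer such that ζ_{ℓ^ε} ∈ Γ ∩ K(ζ_ℓ). Then [K(Γ):K] = |Γ_ℓ : K^×| · [K(W_ℓ, ζ_ℓ):K] / (ℓ^ε · [K(ζ_{ℓ^τ}) : K(ζ_ℓ)]). -/

import Mathlib

noncomputable section

open IntermediateField

/-- `K^×` viewed as a subgroup of the units of the algebraic closure of `K`. -/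
def baseUnits (K : Type*) [Field K] : Subgroup (AlgebraicClosure K)ˣ :=
  (Units.map (algebraMap K (AlgebraicClosure K)).toMonoidHom).range

/-- The subgroup of `(AlgebraicClosure K)ˣ` of elements whose `m`-th power lies in `K^×`. -/
def radGroup (K : Type*) [Field K] (m : ℕ) : Subgroup (AlgebraicClosure K)ˣ where
  carrier := {x | ∃ y : K, algebraMap K (AlgebraicClosure K) y = (x : AlgebraicClosure K) ^ m}
  one_mem' := ⟨1, by simp⟩
  mul_mem' := by
    rintro a b ⟨y, hy⟩ ⟨z, hz⟩
    exact ⟨y * z, by rw [map_mul, hy, hz, Units.val_mul, mul_pow]⟩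
  inv_mem' := by
    rintro a ⟨y, hy⟩
    refine ⟨y⁻¹, ?_⟩
    rw [map_inv₀, hy, Units.val_inv_eq_inv_val, inv_pow]

lemma radGroup_le (K : Type*) [Field K] {m k : ℕ} :
    radGroup K m ≤ radGroup K (m * k) := by
  rintro x ⟨y, hy⟩
  exact ⟨y ^ k, by rw [map_pow, hy, ← pow_mul]⟩

/-- The group `√[ℓ^∞]{K^×}` of radicals of `ℓ`-power order over `K`. -/
def radInf (K : Type*) [Field K] (ℓ : ℕ) : Subgroup (AlgebraicClosure K)ˣ where
  carrier := {x | ∃ n : ℕ, x ∈ radGroup K (ℓ ^ n)}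
  one_mem' := ⟨0, one_mem _⟩
  mul_mem' := by
    rintro a b ⟨n, ha⟩ ⟨m, hb⟩
    refine ⟨n + m, mul_mem ?_ ?_⟩
    · have h : radGroup K (ℓ ^ n) ≤ radGroup K (ℓ ^ (n + m)) := by
        rw [pow_add]; exact radGroup_le K
      exact h ha
    · have h : radGroup K (ℓ ^ m) ≤ radGroup K (ℓ ^ (n + m)) := by
        rw [add_comm, pow_add]; exact radGroup_le K
      exact h hb
  inv_mem' := by
    rintro a ⟨n, ha⟩
    exact ⟨n, inv_mem ha⟩

/-- The units of the algebraic closure lying in an intermediate field `F`, as a subgroup. -/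
def unitsIn {K : Type*} [Field K] (F : IntermediateField K (AlgebraicClosure K)) :
    Subgroup (AlgebraicClosure K)ˣ where
  carrier := {x | (x : AlgebraicClosure K) ∈ F}
  one_mem' := by
    show ((1 : (AlgebraicClosure K)ˣ) : AlgebraicClosure K) ∈ F
    simpa using one_mem F
  mul_mem' := by
    intro a b ha hb
    show ((a * b : (AlgebraicClosure K)ˣ) : AlgebraicClosure K) ∈ F
    rw [Units.val_mul]
    exact mul_mem ha hb
  inv_mem' := by
    intro x hx
    show ((x⁻¹ : (AlgebraicClosure K)ˣ) : AlgebraicClosure K) ∈ F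
    rw [Units.val_inv_eq_inv_val]
    exact inv_mem hx

/-- `K(ζ_{2𝒫})`: the extension of `K` generated by all roots of unity whose order is `4` or
an odd prime, and not divisible by the characteristic of `K`. -/
def cyclo2P (K : Type*) [Field K] : IntermediateField K (AlgebraicClosure K) :=
  IntermediateField.adjoin K
    {x : AlgebraicClosure K |
      ∃ n : ℕ, (n = 4 ∨ (n.Prime ∧ Odd n)) ∧ ¬ (ringChar K ∣ n) ∧ IsPrimitiveRoot x n}

/-- The set of roots of unity of order exactly `n` in the algebraic closure of `K`. -/
def primRoots (K : Type*) [Field K] (n : ℕ) : Set (AlgebraicClosure K) :=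
  {x | IsPrimitiveRoot x n}

/-- The set of roots of unity of order `ℓ^n` for `n ≤ t` (all of them if `t = ∞`). -/
def pPowRoots (K : Type*) [Field K] (ℓ : ℕ) (t : ℕ∞) : Set (AlgebraicClosure K) :=
  {x | ∃ n : ℕ, (n : ℕ∞) ≤ t ∧ IsPrimitiveRoot x (ℓ ^ n)}

/-- The set of units that are roots of unity of order `ℓ^n` for `n ≤ t`. -/
def pPowRootsUnits (K : Type*) [Field K] (ℓ : ℕ) (t : ℕ∞) : Set (AlgebraicClosure K)ˣ :=
  {x | ∃ n : ℕ, (n : ℕ∞) ≤ t ∧ IsPrimitiveRoot (x : AlgebraicClosure K) (ℓ ^ n)}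

/-!
Put `L = K(W_ℓ, ζ_ℓ)`, an abelian extension of `K`. As the elements of `W_ℓ` have order prime to
`ℓ`, the `ℓ`-power roots of unity of `Γ` already lie in `Γ_ℓ`, so that `K(Γ) = L(Γ_ℓ)`.

Over a field `F` containing `ζ_ℓ`, adjoining a group `G` of radicals one Kummer step of degree `ℓ`
at a time gives `[F(G) : F] = |G : G ∩ F^×|` whenever this index is a power of `ℓ`. For `F = L` and
`G = Γ_ℓ` it remains to compute `|Γ_ℓ ∩ L^× : K^×|`. Since `L / K` is abelian and `ζ_ℓ ∉ K`, an
`ℓ`-power radical of `K` lying in `L` is an element of `K` times an `ℓ`-power root of unity: choose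
`σ` acting on roots of unity as raising to the power `s` with `ℓ ∤ s - 1`; then `a ^ (s - 1)`
has this form, and so does a power of `a` of exponent a power of `ℓ`. Hence the index is `ℓ ^ τ`.
The same degree formula for `F = K(ζ_ℓ)` and the group generated by `ζ_{ℓ^τ}` gives
`[K(ζ_{ℓ^τ}) : K(ζ_ℓ)] = ℓ ^ (τ - ε)`.
-/

section Groups

theorem mem_of_zpow_mem_of_isCoprime {G : Type*} [Group G] {H : Subgroup G} {a : G} {m n : ℤ}
    (h : IsCoprime m n) (hm : a ^ m ∈ H) (hn : a ^ n ∈ H) : a ∈ H := by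
  obtain ⟨u, v, huv⟩ := h
  have ha : a = (a ^ m) ^ u * (a ^ n) ^ v := by
    rw [← zpow_mul', ← zpow_mul', ← zpow_add, huv, zpow_one]
  rw [ha]
  exact mul_mem (zpow_mem hm u) (zpow_mem hn v)

theorem relIndex_zpowers {G : Type*} [Group G] (H : Subgroup G) [H.Normal] (a : G) :
    H.relIndex (Subgroup.zpowers a) = orderOf (a : G ⧸ H) := by
  have h := Subgroup.relIndex_ker (K := Subgroup.zpowers a) (QuotientGroup.mk' H)
  rwa [QuotientGroup.ker_mk', MonoidHom.map_zpowers, Nat.card_zpowers] at h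

theorem relIndex_zpowers_eq_prime_pow {G : Type*} [Group G] {H : Subgroup G} [H.Normal] {a : G}
    {p n : ℕ} (hp : p.Prime) (h : ∀ k, a ^ p ^ k ∈ H ↔ n ≤ k) :
    H.relIndex (Subgroup.zpowers a) = p ^ n := by
  have hpow (m : ℕ) : (a : G ⧸ H) ^ m = 1 ↔ a ^ m ∈ H := by
    rw [← QuotientGroup.mk_pow, QuotientGroup.eq_one_iff]
  have hdvd : orderOf (a : G ⧸ H) ∣ p ^ n :=
    orderOf_dvd_of_pow_eq_one ((hpow _).2 ((h n).2 le_rfl))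
  obtain ⟨k, hkn, hk⟩ := (Nat.dvd_prime_pow hp).1 hdvd
  have hnk : n ≤ k := (h k).1 ((hpow _).1 (hk ▸ pow_orderOf_eq_one _))
  rw [relIndex_zpowers, hk, le_antisymm hkn hnk]

variable {G : Type*} [CommGroup G]

theorem relIndex_eq_of_le_sup {H A B : Subgroup G} (hAB : A ≤ B)
    (hB : B ≤ H ⊔ A) : H.relIndex B = H.relIndex A := by
  rw [← Subgroup.relIndex_sup_right A H, ← Subgroup.relIndex_sup_right B H]
  exact congrArg H.relIndex
    (le_antisymm (sup_le (hB.trans_eq (sup_comm H A)) le_sup_right) (sup_le_sup_right hAB H))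

theorem exists_pow_prime_mem_of_dvd_relIndex {H M : Subgroup G} {p : ℕ} [Fact p.Prime]
    (h : p ∣ H.relIndex M) (h0 : H.relIndex M ≠ 0) : ∃ a ∈ M, a ∉ H ∧ a ^ p ∈ H := by
  have : Finite (M ⧸ H.subgroupOf M) := Nat.finite_of_card_ne_zero h0
  obtain ⟨q, hq⟩ := exists_prime_orderOf_dvd_card' p h
  obtain ⟨a, rfl⟩ := QuotientGroup.mk_surjective q
  refine ⟨a, a.2, fun ha => ?_, ?_⟩
  · rw [(QuotientGroup.eq_one_iff a).2 ha, orderOf_one] at hq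
    exact (Fact.out : p.Prime).one_lt.ne hq
  · have hpow := pow_orderOf_eq_one (a : M ⧸ H.subgroupOf M)
    rw [hq, ← QuotientGroup.mk_pow, QuotientGroup.eq_one_iff] at hpow
    exact hpow

theorem coprime_orderOf_of_mem_closure {S : Set G} {n : ℕ} (hS : ∀ x ∈ S, (orderOf x).Coprime n)
    {x : G} (hx : x ∈ Subgroup.closure S) : (orderOf x).Coprime n := by
  induction hx using Subgroup.closure_induction with
  | mem x hx => exact hS x hx
  | one => simp
  | mul x y _ _ hx hy =>
    exact (hx.mul_left hy).coprime_dvd_left (Commute.all x y).orderOf_mul_dvd_mul_orderOf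
  | inv x _ hx => rwa [orderOf_inv]

theorem mem_of_mem_sup_of_pow_eq_one {W M : Subgroup G} {x : G} {n : ℕ}
    (hW : ∀ w ∈ W, (orderOf w).Coprime n) (hx : x ∈ W ⊔ M) (hxn : x ^ n = 1) : x ∈ M := by
  obtain ⟨w, hw, g, hg, rfl⟩ := Subgroup.mem_sup.1 hx
  refine mem_of_zpow_mem_of_isCoprime (Nat.isCoprime_iff_coprime.2 (hW w hw)) ?_ ?_
  · rw [zpow_natCast, mul_pow, pow_orderOf_eq_one, one_mul]
    exact pow_mem hg _
  · rw [zpow_natCast, hxn]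
    exact one_mem M

end Groups

section RootsOfUnity

theorem isPrimitiveRoot_pow_prime_pow {M : Type*} [CommMonoid M] {x : M} {p m : ℕ} (hp : p.Prime)
    (hx : IsPrimitiveRoot x (p ^ m)) (k : ℕ) : IsPrimitiveRoot (x ^ p ^ k) (p ^ (m - k)) := by
  rcases le_total k m with hkm | hmk
  · exact hx.pow (pow_pos hp.pos m) (by rw [← pow_add, Nat.add_sub_cancel' hkm])
  · rw [(hx.pow_eq_one_iff_dvd _).2 (pow_dvd_pow p hmk), Nat.sub_eq_zero_of_le hmk, pow_zero]
    exact IsPrimitiveRoot.one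

theorem exists_eq_pow_mul_of_pow_eq_pow {R : Type*} [CommRing R] [IsDomain R] {n : ℕ} [NeZero n]
    {z x y : R} (hz : IsPrimitiveRoot z n) (h : x ^ n = y ^ n) : ∃ i : ℕ, x = z ^ i * y := by
  have hx : x ∈ Polynomial.nthRoots n (y ^ n) := (Polynomial.mem_nthRoots (NeZero.pos n)).2 h
  rw [hz.nthRoots_eq rfl] at hx
  obtain ⟨i, -, hi⟩ := Multiset.mem_map.1 hx
  exact ⟨i, hi.symm⟩

/-- `n` is the largest integer such that the group `H` contains a root of unity of order `p ^ n`.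
It suffices to exclude the order `p ^ (n + 1)`, since the higher ones reduce to it by taking
powers. -/
structure IsMaxRootExponent {M : Type*} [CommMonoid M] (p : ℕ) (H : Subgroup Mˣ) (n : ℕ) :
    Prop where
  exists_mem : ∃ x : Mˣ, IsPrimitiveRoot (x : M) (p ^ n) ∧ x ∈ H
  notMem : ∀ x : Mˣ, IsPrimitiveRoot (x : M) (p ^ (n + 1)) → x ∉ H

namespace IsMaxRootExponent

theorem of_sup_inf {M : Type*} [CommMonoid M] {p n : ℕ} {W G H : Subgroup Mˣ}
    (hW : ∀ w ∈ W, (orderOf w).Coprime p)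
    (h : IsMaxRootExponent p ((W ⊔ G) ⊓ H) n) : IsMaxRootExponent p (G ⊓ H) n where
  exists_mem := by
    obtain ⟨x, hx, hxWG, hxH⟩ := h.exists_mem
    exact ⟨x, hx, mem_of_mem_sup_of_pow_eq_one (fun w hw => (hW w hw).pow_right n) hxWG
      (IsPrimitiveRoot.coe_units_iff.1 hx).pow_eq_one, hxH⟩
  notMem x hx hxGH := h.notMem x hx (inf_le_inf_right H le_sup_right hxGH)

variable {R : Type*} [CommRing R] [IsDomain R] {p n m : ℕ} {H : Subgroup Rˣ} {x : Rˣ}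

theorem mem_iff (h : IsMaxRootExponent p H n) (hp : p.Prime)
    (hx : IsPrimitiveRoot (x : R) (p ^ m)) : x ∈ H ↔ m ≤ n := by
  constructor
  · contrapose!
    intro hnm hxH
    refine h.notMem (x ^ p ^ (m - (n + 1))) ?_ (pow_mem hxH _)
    simpa [Nat.sub_sub_self hnm] using isPrimitiveRoot_pow_prime_pow hp hx (m - (n + 1))
  · intro hmn
    obtain ⟨y, hy, hyH⟩ := h.exists_mem
    have : NeZero (p ^ n) := ⟨pow_ne_zero n hp.ne_zero⟩
    refine Subgroup.zpowers_le.2 hyH ?_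
    rw [(IsPrimitiveRoot.coe_units_iff.1 hy).zpowers_eq, mem_rootsOfUnity]
    exact ((IsPrimitiveRoot.coe_units_iff.1 hx).pow_eq_one_iff_dvd _).2 (pow_dvd_pow p hmn)

theorem inf_rootsOfUnity_le (h : IsMaxRootExponent p H n) (hp : p.Prime)
    (hx : IsPrimitiveRoot (x : R) (p ^ n)) (k : ℕ) :
    H ⊓ rootsOfUnity (p ^ k) R ≤ Subgroup.zpowers x := by
  rintro y ⟨hyH, hyk⟩
  obtain ⟨m, -, hm⟩ := (Nat.dvd_prime_pow hp).1 (orderOf_dvd_of_pow_eq_one hyk)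
  have hy : IsPrimitiveRoot y (p ^ m) := hm ▸ IsPrimitiveRoot.orderOf y
  have hmn : m ≤ n := (h.mem_iff hp (IsPrimitiveRoot.coe_units_iff.2 hy)).1 hyH
  have : NeZero (p ^ n) := ⟨pow_ne_zero n hp.ne_zero⟩
  rw [(IsPrimitiveRoot.coe_units_iff.1 hx).zpowers_eq, mem_rootsOfUnity]
  exact (hy.pow_eq_one_iff_dvd _).2 (pow_dvd_pow p hmn)

theorem relIndex_zpowers (h : IsMaxRootExponent p H n) (hp : p.Prime)
    (hx : IsPrimitiveRoot (x : R) (p ^ m)) : H.relIndex (Subgroup.zpowers x) = p ^ (m - n) := by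
  refine relIndex_zpowers_eq_prime_pow hp fun k => ?_
  rw [h.mem_iff hp (m := m - k) (by simpa using isPrimitiveRoot_pow_prime_pow hp hx k)]
  omega

end IsMaxRootExponent

end RootsOfUnity

section Kummer

open Polynomial

variable {F E : Type*} [Field F] [Field E] [Algebra F E] {ℓ : ℕ} {z : F}

theorem mem_range_algebraMap_of_pow_eq_pow [NeZero ℓ] (hz : IsPrimitiveRoot z ℓ) {x : E} {c : F}
    (h : x ^ ℓ = algebraMap F E c ^ ℓ) : x ∈ Set.range (algebraMap F E) := by
  obtain ⟨i, rfl⟩ :=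
    exists_eq_pow_mul_of_pow_eq_pow (hz.map_of_injective (algebraMap F E).injective) h
  exact ⟨z ^ i * c, by rw [map_mul, map_pow]⟩

theorem minpoly_eq_X_pow_prime_pow_sub_C (hℓ : ℓ.Prime) (hodd : Odd ℓ) (hz : IsPrimitiveRoot z ℓ)
    {x : E} {n : ℕ} {c : F} (hc : algebraMap F E c = x ^ ℓ ^ (n + 1))
    (hx : x ^ ℓ ^ n ∉ Set.range (algebraMap F E)) : minpoly F x = X ^ ℓ ^ (n + 1) - C c := by
  have : NeZero ℓ := ⟨hℓ.ne_zero⟩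
  have hpow : ∀ b : F, b ^ ℓ ≠ c := by
    rintro b rfl
    refine hx (mem_range_algebraMap_of_pow_eq_pow hz (c := b) ?_)
    rw [← map_pow, hc, ← pow_mul, pow_succ]
  have hirr : Irreducible (X ^ ℓ ^ (n + 1) - C c) :=
    X_pow_sub_C_irreducible_of_prime_pow hℓ (by rintro rfl; exact absurd hodd (by decide)) _ hpow
  exact (minpoly.eq_of_irreducible_of_monic hirr (by simp [hc])
    (monic_X_pow_sub_C c (pow_ne_zero _ hℓ.ne_zero))).symm

theorem finrank_adjoin_simple_eq_prime_pow (hℓ : ℓ.Prime) (hodd : Odd ℓ)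
    (hz : IsPrimitiveRoot z ℓ) {x : E} {n : ℕ}
    (hxn : x ^ ℓ ^ (n + 1) ∈ Set.range (algebraMap F E))
    (hx : x ^ ℓ ^ n ∉ Set.range (algebraMap F E)) : Module.finrank F F⟮x⟯ = ℓ ^ (n + 1) := by
  obtain ⟨c, hc⟩ := hxn
  have hint : IsIntegral F x :=
    .of_pow (pow_pos hℓ.pos (n + 1)) (hc ▸ isIntegral_algebraMap)
  rw [adjoin.finrank hint, minpoly_eq_X_pow_prime_pow_sub_C hℓ hodd hz hc hx,
    natDegree_X_pow_sub_C]

variable {a b : E}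

theorem finrank_adjoin_simple_eq_prime (hℓ : ℓ.Prime) (hodd : Odd ℓ) (hz : IsPrimitiveRoot z ℓ)
    (ha : a ∉ Set.range (algebraMap F E)) (haℓ : a ^ ℓ ∈ Set.range (algebraMap F E)) :
    Module.finrank F F⟮a⟯ = ℓ := by
  simpa using finrank_adjoin_simple_eq_prime_pow (n := 0) hℓ hodd hz (by simpa using haℓ)
    (by simpa using ha)

theorem pow_prime_mem_range_of_pow_prime_pow_mem_range (hℓ : ℓ.Prime) (hodd : Odd ℓ)
    (hz : IsPrimitiveRoot z ℓ) (hE : Module.finrank F F⟮b⟯ ∣ ℓ) {n : ℕ}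
    (hb : b ^ ℓ ^ n ∈ Set.range (algebraMap F E)) : b ^ ℓ ∈ Set.range (algebraMap F E) := by
  induction n with
  | zero =>
    obtain ⟨c, hc⟩ := hb
    exact ⟨c ^ ℓ, by rw [map_pow, hc, pow_zero, pow_one]⟩
  | succ n ih =>
    by_cases hbn : b ^ ℓ ^ n ∈ Set.range (algebraMap F E)
    · exact ih hbn
    · rw [finrank_adjoin_simple_eq_prime_pow hℓ hodd hz hb hbn] at hE
      have hn : n + 1 ≤ 1 := (Nat.pow_dvd_pow_iff_le_right hℓ.one_lt).1 (by rwa [pow_one])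
      obtain rfl : n = 0 := by omega
      simpa using hb

theorem exists_algHom_adjoin_simple_apply_gen (hℓ : ℓ.Prime) (hodd : Odd ℓ)
    (hz : IsPrimitiveRoot z ℓ) (ha : a ∉ Set.range (algebraMap F E))
    (haℓ : a ^ ℓ ∈ Set.range (algebraMap F E)) :
    ∃ σ : F⟮a⟯ →ₐ[F] E, σ (AdjoinSimple.gen F a) = algebraMap F E z * a := by
  obtain ⟨c, hc⟩ := haℓ
  have hmin : minpoly F a = X ^ ℓ - C c := by
    simpa using minpoly_eq_X_pow_prime_pow_sub_C (n := 0) hℓ hodd hz (by simpa using hc)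
      (by simpa using ha)
  have hint : IsIntegral F a := .of_pow hℓ.pos (hc ▸ isIntegral_algebraMap)
  have hroot : algebraMap F E z * a ∈ (minpoly F a).aroots E := by
    rw [mem_aroots, hmin]
    refine ⟨X_pow_sub_C_ne_zero hℓ.pos c, ?_⟩
    rw [map_sub, map_pow, aeval_X, aeval_C, mul_pow, ← map_pow, hz.pow_eq_one, map_one, one_mul, hc,
      sub_self]
  exact ⟨(algHomAdjoinIntegralEquiv F hint).symm ⟨_, hroot⟩,
    algHomAdjoinIntegralEquiv_symm_apply_gen F hint _⟩

theorem mem_range_algebraMap_of_algHom_apply_eq (hℓ : ℓ.Prime) (hodd : Odd ℓ)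
    (hz : IsPrimitiveRoot z ℓ) (ha : a ∉ Set.range (algebraMap F E))
    (haℓ : a ^ ℓ ∈ Set.range (algebraMap F E)) {σ : F⟮a⟯ →ₐ[F] E}
    (hσa : σ (AdjoinSimple.gen F a) ≠ a) {y : F⟮a⟯} (hσy : σ y = y)
    (hyℓ : (y : E) ^ ℓ ∈ Set.range (algebraMap F E)) : (y : E) ∈ Set.range (algebraMap F E) := by
  by_contra hy
  have hdeg := finrank_adjoin_simple_eq_prime hℓ hodd hz ha haℓ
  have : FiniteDimensional F F⟮a⟯ := Module.finite_of_finrank_pos (hdeg ▸ hℓ.pos)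
  have hadj : F⟮(y : E)⟯ = F⟮a⟯ :=
    eq_of_le_of_finrank_eq (adjoin_simple_le_iff.2 y.2)
      ((finrank_adjoin_simple_eq_prime hℓ hodd hz hy hyℓ).trans hdeg.symm)
  have hσ : σ = F⟮a⟯.val :=
    algHom_ext_of_eq_adjoin F hadj.symm (by rintro _ rfl; exact hσy)
  exact hσa (by rw [hσ]; rfl)

theorem exists_eq_pow_mul_algebraMap_of_mem_adjoin (hℓ : ℓ.Prime) (hodd : Odd ℓ)
    (hz : IsPrimitiveRoot z ℓ) (ha : a ∉ Set.range (algebraMap F E))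
    (haℓ : a ^ ℓ ∈ Set.range (algebraMap F E)) (hb : b ∈ F⟮a⟯)
    (hbℓ : b ^ ℓ ∈ Set.range (algebraMap F E)) :
    ∃ (i : ℕ) (f : F), b = a ^ i * algebraMap F E f := by
  have : NeZero ℓ := ⟨hℓ.ne_zero⟩
  have hzE : IsPrimitiveRoot (algebraMap F E z) ℓ := hz.map_of_injective (algebraMap F E).injective
  have ha0 : a ≠ 0 := fun h => ha ⟨0, by rw [map_zero, h]⟩
  obtain ⟨σ, hσa⟩ := exists_algHom_adjoin_simple_apply_gen hℓ hodd hz ha haℓ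
  obtain ⟨i, hσb⟩ : ∃ i : ℕ, σ ⟨b, hb⟩ = algebraMap F E z ^ i * b := by
    refine exists_eq_pow_mul_of_pow_eq_pow hzE ?_
    obtain ⟨d, hd⟩ := hbℓ
    rw [← map_pow, ← hd, ← σ.commutes d]
    exact congrArg σ (Subtype.ext hd.symm)
  let y : F⟮a⟯ := ⟨b, hb⟩ / AdjoinSimple.gen F a ^ i
  have hy : (y : E) = b / a ^ i := rfl
  have hσy : σ y = y := by
    rw [map_div₀, map_pow, hσa, hσb, mul_pow, hy,
      mul_div_mul_left _ _ (pow_ne_zero i (hzE.ne_zero hℓ.ne_zero))]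
  have hyℓ : (y : E) ^ ℓ ∈ Set.range (algebraMap F E) := by
    obtain ⟨c, hc⟩ := haℓ
    obtain ⟨d, hd⟩ := hbℓ
    exact ⟨d / c ^ i, by rw [hy, map_div₀, map_pow, hc, hd, div_pow, pow_right_comm]⟩
  have hσa_ne : σ (AdjoinSimple.gen F a) ≠ a := by
    rw [hσa, Ne, mul_eq_right₀ ha0]
    exact hzE.ne_one hℓ.one_lt
  obtain ⟨f, hf⟩ := mem_range_algebraMap_of_algHom_apply_eq hℓ hodd hz ha haℓ hσa_ne hσy hyℓ
  exact ⟨i, f, by rw [hf, hy, mul_div_cancel₀ _ (pow_ne_zero i ha0)]⟩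

end Kummer

section Kneser

variable {K Ω : Type*} [Field K] [Field Ω] [Algebra K Ω]

/-- The multiplicative group `F^×` of an intermediate field `F` of `Ω / K`, as a subgroup of `Ωˣ`,
so that it can be compared there with groups of radicals. -/
def unitSubgroup (F : IntermediateField K Ω) : Subgroup Ωˣ where
  carrier := {x | (x : Ω) ∈ F}
  one_mem' := one_mem F
  mul_mem' hx hy := F.mul_mem hx hy
  inv_mem' {x} hx := by
    simpa only [Set.mem_ofPred_eq, Units.val_inv_eq_inv_val] using F.inv_mem hx

theorem mem_unitSubgroup {F : IntermediateField K Ω} {x : Ωˣ} :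
    x ∈ unitSubgroup F ↔ (x : Ω) ∈ F :=
  Iff.rfl

theorem unitSubgroup_mono {F F' : IntermediateField K Ω} (h : F ≤ F') :
    unitSubgroup F ≤ unitSubgroup F' :=
  fun _ hx => h hx

theorem adjoin_val_le_iff {G : Subgroup Ωˣ} {F : IntermediateField K Ω} :
    adjoin K (Units.val '' (G : Set Ωˣ)) ≤ F ↔ G ≤ unitSubgroup F := by
  rw [adjoin_le_iff, Set.image_subset_iff]
  rfl

theorem extendScalars_sup_adjoin (F : IntermediateField K Ω) (S : Set Ω) :
    extendScalars (le_sup_left : F ≤ F ⊔ adjoin K S) = adjoin F S :=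
  restrictScalars_injective K (restrictScalars_adjoin_eq_sup K F S).symm

theorem mem_range_algebraMap_iff_mem {F : IntermediateField K Ω} {x : Ω} :
    x ∈ Set.range (algebraMap F Ω) ↔ x ∈ F := by
  simp [IntermediateField.algebraMap_apply]

variable {ℓ : ℕ} {z : Ω} {F : IntermediateField K Ω} {a b : Ωˣ}

theorem relfinrank_sup_adjoin_simple (hℓ : ℓ.Prime) (hodd : Odd ℓ) (hz : IsPrimitiveRoot z ℓ)
    (hzF : z ∈ F) (ha : a ∉ unitSubgroup F) (haℓ : a ^ ℓ ∈ unitSubgroup F) :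
    relfinrank F (F ⊔ K⟮(a : Ω)⟯) = ℓ := by
  rw [relfinrank_eq_finrank_of_le le_sup_left, extendScalars_sup_adjoin]
  exact finrank_adjoin_simple_eq_prime hℓ hodd (z := (⟨z, hzF⟩ : F))
    (IsPrimitiveRoot.of_map_of_injective hz F.val.injective)
    (mem_range_algebraMap_iff_mem.not.2 ha) (mem_range_algebraMap_iff_mem.2 haℓ)

theorem mem_unitSubgroup_sup_zpowers (hℓ : ℓ.Prime) (hodd : Odd ℓ) (hz : IsPrimitiveRoot z ℓ)
    (hzF : z ∈ F) (ha : a ∉ unitSubgroup F) (haℓ : a ^ ℓ ∈ unitSubgroup F)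
    (hb : b ∈ unitSubgroup (F ⊔ K⟮(a : Ω)⟯)) {n : ℕ} (hbn : b ^ ℓ ^ n ∈ unitSubgroup F) :
    b ∈ unitSubgroup F ⊔ Subgroup.zpowers a := by
  have hz' : IsPrimitiveRoot (⟨z, hzF⟩ : F) ℓ :=
    IsPrimitiveRoot.of_map_of_injective hz F.val.injective
  have ha' := mem_range_algebraMap_iff_mem.not.2 ha
  have haℓ' := mem_range_algebraMap_iff_mem.2 haℓ
  have hb' : (b : Ω) ∈ adjoin F {(a : Ω)} := extendScalars_sup_adjoin F {(a : Ω)} ▸ hb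
  have hdvd : Module.finrank F F⟮(b : Ω)⟯ ∣ ℓ :=
    finrank_adjoin_simple_eq_prime hℓ hodd hz' ha' haℓ' ▸
      finrank_dvd_of_le_right (adjoin_simple_le_iff.2 hb')
  have hbℓ := pow_prime_mem_range_of_pow_prime_pow_mem_range hℓ hodd hz' hdvd
    (mem_range_algebraMap_iff_mem.2 hbn)
  obtain ⟨i, f, hf⟩ := exists_eq_pow_mul_algebraMap_of_mem_adjoin hℓ hodd hz' ha' haℓ' hb' hbℓ
  refine Subgroup.mem_sup.2
    ⟨b * (a ^ i)⁻¹, ?_, a ^ i, Subgroup.npow_mem_zpowers a i, inv_mul_cancel_right _ _⟩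
  have hbf : (b * (a ^ i)⁻¹ : Ωˣ) = (f : Ω) := by
    rw [Units.val_mul, hf, mul_right_comm, ← Units.val_pow_eq_pow_val, Units.mul_inv, one_mul]
    rfl
  exact mem_unitSubgroup.2 (hbf ▸ f.2)

theorem relIndex_unitSubgroup_sup_adjoin_simple_inf (hℓ : ℓ.Prime) (hodd : Odd ℓ)
    (hz : IsPrimitiveRoot z ℓ) (hzF : z ∈ F) (ha : a ∉ unitSubgroup F)
    (haℓ : a ^ ℓ ∈ unitSubgroup F) {G : Subgroup Ωˣ} (haG : a ∈ G) {n : ℕ}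
    (hG : ∀ b ∈ G, b ^ ℓ ^ n ∈ unitSubgroup F) :
    (unitSubgroup F).relIndex (unitSubgroup (F ⊔ K⟮(a : Ω)⟯) ⊓ G) = ℓ := by
  have haF' : a ∈ unitSubgroup (F ⊔ K⟮(a : Ω)⟯) := adjoin_simple_le_iff.1 le_sup_right
  have hle : Subgroup.zpowers a ≤ unitSubgroup (F ⊔ K⟮(a : Ω)⟯) ⊓ G :=
    Subgroup.zpowers_le.2 ⟨haF', haG⟩
  rw [relIndex_eq_of_le_sup hle fun b hb =>
    mem_unitSubgroup_sup_zpowers hℓ hodd hz hzF ha haℓ hb.1 (hG b hb.2)]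
  have : Fact ℓ.Prime := ⟨hℓ⟩
  rw [relIndex_zpowers]
  exact orderOf_eq_prime ((QuotientGroup.eq_one_iff _).2 haℓ) (mt (QuotientGroup.eq_one_iff a).1 ha)

theorem relfinrank_sup_adjoin_val (hℓ : ℓ.Prime) (hodd : Odd ℓ) (hz : IsPrimitiveRoot z ℓ)
    (hzF : z ∈ F) {G : Subgroup Ωˣ} {m : ℕ} (hG : (unitSubgroup F).relIndex G = ℓ ^ m) :
    relfinrank F (F ⊔ adjoin K (Units.val '' (G : Set Ωˣ))) = ℓ ^ m := by
  have : Fact ℓ.Prime := ⟨hℓ⟩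
  induction m generalizing F with
  | zero =>
    rw [pow_zero, Subgroup.relIndex_eq_one] at hG
    rw [sup_eq_left.2 (adjoin_val_le_iff.2 hG), relfinrank_self, pow_zero]
  | succ m ih =>
    obtain ⟨a, haG, ha, haℓ⟩ := exists_pow_prime_mem_of_dvd_relIndex (p := ℓ)
      (hG ▸ dvd_pow_self ℓ m.succ_ne_zero) (hG ▸ pow_ne_zero _ hℓ.ne_zero)
    let F' := F ⊔ K⟮(a : Ω)⟯
    have hFF' : F ≤ F' := le_sup_left
    have hF'G : (unitSubgroup F').relIndex G = ℓ ^ m := by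
      have hstep := relIndex_unitSubgroup_sup_adjoin_simple_inf hℓ hodd hz hzF ha haℓ haG
        fun b hb => hG ▸ Subgroup.pow_relIndex_mem _ hb
      have hmul := Subgroup.relIndex_inf_mul_relIndex (unitSubgroup F) (unitSubgroup F') G
      rw [hstep, inf_eq_left.2 (unitSubgroup_mono hFF'), hG, pow_succ'] at hmul
      exact Nat.eq_of_mul_eq_mul_left hℓ.pos hmul
    have hsup : F' ⊔ adjoin K (Units.val '' (G : Set Ωˣ)) =
        F ⊔ adjoin K (Units.val '' (G : Set Ωˣ)) := by
      have haS := subset_adjoin K _ (Set.mem_image_of_mem Units.val haG)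
      rw [sup_assoc, sup_eq_right.2 (adjoin_simple_le_iff.2 haS)]
    rw [← hsup, ← relfinrank_mul_relfinrank hFF' le_sup_left, ih (hFF' hzF) hF'G,
      relfinrank_sup_adjoin_simple hℓ hodd hz hzF ha haℓ, pow_succ']

end Kneser

section Abelian

variable {K C : Type*} [Field K] [Field C] [Algebra K C]

theorem exists_smul_eq_zpow (n : ℕ) [NeZero n] (σ : Gal(C/K)) :
    ∃ s : ℤ, ∀ w ∈ rootsOfUnity n C, σ • w = w ^ s := by
  obtain ⟨s, hs⟩ := rootsOfUnity.integer_power_of_ringEquiv' n (σ : C ≃+* C)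
  exact ⟨s, fun w hw => Units.ext (hs w hw)⟩

theorem mem_unitSubgroup_bot_iff_fixed [IsGalois K C] {x : Cˣ} :
    x ∈ unitSubgroup (⊥ : IntermediateField K C) ↔ ∀ σ : Gal(C/K), σ • x = x := by
  rw [mem_unitSubgroup, InfiniteGalois.mem_bot_iff_fixed]
  exact forall_congr' fun σ => (Units.ext_iff (u := σ • x)).symm

theorem smul_div_mem_rootsOfUnity {n : ℕ} {a : Cˣ}
    (ha : a ^ n ∈ unitSubgroup (⊥ : IntermediateField K C)) (σ : Gal(C/K)) :
    σ • a / a ∈ rootsOfUnity n C := by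
  obtain ⟨c, hc⟩ := mem_bot.1 ha
  have hσ : σ • a ^ n = a ^ n := Units.ext (by
    rw [AlgEquiv.smul_units_def, Units.coe_map, ← hc]
    exact σ.commutes c)
  rw [mem_rootsOfUnity, div_pow, ← smul_pow', hσ, div_self']

variable [IsAbelianGalois K C] {ℓ : ℕ} {a : Cˣ}

/- If `σ` raises the `n`-th roots of unity to the power `s`, then `σ a / a ^ s` is fixed by every
`ρ`: as `ρ` commutes with `σ`, replacing `a` by `ρ a = w a` multiplies both `σ a` and `a ^ s` by
`w ^ s`. -/
theorem smul_div_zpow_mem_unitSubgroup_bot {n : ℕ}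
    (ha : a ^ n ∈ unitSubgroup (⊥ : IntermediateField K C)) {σ : Gal(C/K)} {s : ℤ}
    (hs : ∀ w ∈ rootsOfUnity n C, σ • w = w ^ s) :
    σ • a / a ^ s ∈ unitSubgroup (⊥ : IntermediateField K C) := by
  rw [mem_unitSubgroup_bot_iff_fixed]
  intro ρ
  obtain ⟨w, hw, hρ⟩ : ∃ w ∈ rootsOfUnity n C, ρ • a = w * a :=
    ⟨_, smul_div_mem_rootsOfUnity ha ρ, (div_mul_cancel _ _).symm⟩
  have hρσ : ρ • σ • a = w ^ s * σ • a := by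
    rw [smul_smul, mul_comm' ρ σ, mul_smul, hρ, smul_mul', hs w hw]
  rw [smul_div', smul_zpow', hρσ, hρ, mul_zpow, mul_div_mul_left_eq_div]

theorem mem_unitSubgroup_bot_sup_rootsOfUnity (hℓ : ℓ.Prime) {z : C} (hz : IsPrimitiveRoot z ℓ)
    (hzK : z ∉ (⊥ : IntermediateField K C)) {n : ℕ}
    (ha : a ^ ℓ ^ n ∈ unitSubgroup (⊥ : IntermediateField K C)) :
    a ∈ unitSubgroup (⊥ : IntermediateField K C) ⊔ rootsOfUnity (ℓ ^ n) C := by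
  obtain _ | n := n
  · exact Subgroup.mem_sup_left (by simpa using ha)
  have : NeZero (ℓ ^ (n + 1)) := ⟨pow_ne_zero _ hℓ.ne_zero⟩
  lift z to Cˣ using hz.isUnit hℓ.ne_zero
  rw [IsPrimitiveRoot.coe_units_iff] at hz
  obtain ⟨σ, hσ⟩ := not_forall.1 (mt mem_unitSubgroup_bot_iff_fixed.2 hzK)
  obtain ⟨s, hs⟩ := exists_smul_eq_zpow (ℓ ^ (n + 1)) σ
  have hsℓ : ¬ (ℓ : ℤ) ∣ s - 1 := by
    refine mt (fun h => ?_) hσ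
    rw [hs z ((hz.pow_eq_one_iff_dvd _).2 (dvd_pow_self ℓ n.succ_ne_zero)), ← div_eq_one,
      div_eq_mul_inv, ← zpow_sub_one]
    exact (hz.zpow_eq_one_iff_dvd _).2 h
  refine mem_of_zpow_mem_of_isCoprime (m := s - 1) (n := (ℓ ^ (n + 1) : ℕ)) ?_ ?_ ?_
  · rw [Nat.cast_pow]
    exact (((Nat.prime_iff_prime_int.1 hℓ).coprime_iff_not_dvd.2 hsℓ).symm).pow_right
  · have hpow : a ^ (s - 1) = (σ • a / a ^ s)⁻¹ * (σ • a / a) := by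
      rw [zpow_sub_one, inv_div, div_mul_div_cancel, div_eq_mul_inv]
    rw [hpow]
    exact Subgroup.mul_mem_sup (inv_mem (smul_div_zpow_mem_unitSubgroup_bot ha hs))
      (smul_div_mem_rootsOfUnity ha σ)
  · exact Subgroup.mem_sup_left (by rwa [zpow_natCast])

end Abelian

section AbelianRadicals

variable {K Ω : Type*} [Field K] [Field Ω] [Algebra K Ω] {ℓ : ℕ}

theorem coe_mem_bot_iff {L : IntermediateField K Ω} {x : L} :
    (x : Ω) ∈ (⊥ : IntermediateField K Ω) ↔ x ∈ (⊥ : IntermediateField K L) := by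
  simp_rw [mem_bot, Set.mem_range, Subtype.ext_iff]
  rfl

theorem mem_unitSubgroup_bot_sup_rootsOfUnity_of_mem {L : IntermediateField K Ω}
    [IsAbelianGalois K L] (hℓ : ℓ.Prime) {z : Ω} (hz : IsPrimitiveRoot z ℓ) (hzL : z ∈ L)
    (hzK : z ∉ (⊥ : IntermediateField K Ω)) {a : Ωˣ} (haL : a ∈ unitSubgroup L) {n : ℕ}
    (ha : a ^ ℓ ^ n ∈ unitSubgroup (⊥ : IntermediateField K Ω)) :
    a ∈ unitSubgroup (⊥ : IntermediateField K Ω) ⊔ rootsOfUnity (ℓ ^ n) Ω := by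
  let f : Lˣ →* Ωˣ := Units.map (L.val : L →* Ω)
  have hbot : (unitSubgroup (⊥ : IntermediateField K L)).map f ≤
      unitSubgroup (⊥ : IntermediateField K Ω) := by
    rintro _ ⟨x, hx, rfl⟩
    exact coe_mem_bot_iff.2 hx
  let a' : Lˣ := Units.mk0 ⟨a, haL⟩ (Subtype.coe_ne_coe.1 a.ne_zero)
  have haa' : f a' = a := Units.ext rfl
  have ha' : a' ∈ unitSubgroup (⊥ : IntermediateField K L) ⊔ rootsOfUnity (ℓ ^ n) L :=
    mem_unitSubgroup_bot_sup_rootsOfUnity hℓ (z := ⟨z, hzL⟩)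
      (IsPrimitiveRoot.of_map_of_injective hz L.val.injective) (mt coe_mem_bot_iff.2 hzK)
      (coe_mem_bot_iff.1 ha)
  have hmap := Subgroup.mem_map_of_mem f ha'
  rw [haa', Subgroup.map_sup] at hmap
  exact sup_le_sup hbot (map_rootsOfUnity f _) hmap

theorem relIndex_unitSubgroup_bot_inf {L : IntermediateField K Ω} [IsAbelianGalois K L]
    (hℓ : ℓ.Prime) (hK : IsMaxRootExponent ℓ (unitSubgroup (⊥ : IntermediateField K Ω)) 0) {z : Ω}
    (hz : IsPrimitiveRoot z ℓ) (hzL : z ∈ L) {G : Subgroup Ωˣ}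
    (hKG : unitSubgroup (⊥ : IntermediateField K Ω) ≤ G) {n τ : ℕ}
    (hG : ∀ b ∈ G, b ^ ℓ ^ n ∈ unitSubgroup (⊥ : IntermediateField K Ω))
    (hτ : IsMaxRootExponent ℓ (G ⊓ unitSubgroup L) τ) :
    (unitSubgroup (⊥ : IntermediateField K Ω)).relIndex (G ⊓ unitSubgroup L) = ℓ ^ τ := by
  have hzK : z ∉ (⊥ : IntermediateField K Ω) := by
    lift z to Ωˣ using hz.isUnit hℓ.ne_zero
    exact hK.notMem z (by simpa using hz)
  obtain ⟨x, hx, hxGL⟩ := hτ.exists_mem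
  have hle :
      G ⊓ unitSubgroup L ≤ unitSubgroup (⊥ : IntermediateField K Ω) ⊔ Subgroup.zpowers x := by
    rintro b ⟨hbG, hbL⟩
    obtain ⟨c, hc, w, hw, rfl⟩ := Subgroup.mem_sup.1
      (mem_unitSubgroup_bot_sup_rootsOfUnity_of_mem hℓ hz hzL hzK hbL (hG b hbG))
    have hwL : w ∈ unitSubgroup L := (mul_mem_cancel_left (unitSubgroup_mono bot_le hc)).1 hbL
    have hwG : w ∈ G := (mul_mem_cancel_left (hKG hc)).1 hbG
    exact Subgroup.mul_mem_sup hc (hτ.inf_rootsOfUnity_le hℓ hx n ⟨⟨hwG, hwL⟩, hw⟩)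
  rw [relIndex_eq_of_le_sup (Subgroup.zpowers_le.2 hxGL) hle, hK.relIndex_zpowers hℓ hx,
    tsub_zero]

theorem finrank_sup_adjoin_val_mul {L : IntermediateField K Ω} [IsAbelianGalois K L]
    (hℓ : ℓ.Prime) (hodd : Odd ℓ)
    (hK : IsMaxRootExponent ℓ (unitSubgroup (⊥ : IntermediateField K Ω)) 0) {z : Ω}
    (hz : IsPrimitiveRoot z ℓ) (hzL : z ∈ L) {G : Subgroup Ωˣ}
    (hKG : unitSubgroup (⊥ : IntermediateField K Ω) ≤ G) {m τ : ℕ}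
    (hG : (unitSubgroup (⊥ : IntermediateField K Ω)).relIndex G = ℓ ^ m)
    (hτ : IsMaxRootExponent ℓ (G ⊓ unitSubgroup L) τ) :
    Module.finrank K ↥(L ⊔ adjoin K (Units.val '' (G : Set Ωˣ))) * ℓ ^ τ =
      Module.finrank K L * (unitSubgroup (⊥ : IntermediateField K Ω)).relIndex G := by
  have hLG : ℓ ^ τ * (unitSubgroup L).relIndex G =
      (unitSubgroup (⊥ : IntermediateField K Ω)).relIndex G := by
    rw [← relIndex_unitSubgroup_bot_inf hℓ hK hz hzL hKG
      (fun b hb => hG ▸ Subgroup.pow_relIndex_mem _ hb) hτ, inf_comm G,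
      Subgroup.relIndex_inf_mul_relIndex, inf_eq_left.2 (unitSubgroup_mono bot_le)]
  obtain ⟨k, -, hk⟩ := (Nat.dvd_prime_pow hℓ).1 (hG ▸ Dvd.intro_left _ hLG)
  rw [← finrank_bot_mul_relfinrank (le_sup_left : L ≤ L ⊔ _),
    relfinrank_sup_adjoin_val hℓ hodd hz hzL hk, ← hk, mul_assoc, mul_comm _ (ℓ ^ τ), hLG]

end AbelianRadicals

section Cyclotomic

variable {K Ω : Type*} [Field K] [Field Ω] [Algebra K Ω]

theorem isAbelianGalois_adjoin_of_isOfFinOrder {T : Set Ω} (hT : ∀ x ∈ T, IsOfFinOrder x) :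
    IsAbelianGalois K (adjoin K T) := by
  let C := adjoin K {y : Ω | ∃ n ∈ orderOf '' T, n ≠ 0 ∧ y ^ n = 1}
  have hC : IsCyclotomicExtension (orderOf '' T) K C := by
    refine isCyclotomicExtension_adjoin_of_exists_isPrimitiveRoot _ K Ω ?_
    rintro _ ⟨x, -, rfl⟩ -
    exact ⟨x, IsPrimitiveRoot.orderOf x⟩
  have : IsAbelianGalois K C := IsCyclotomicExtension.isAbelianGalois (orderOf '' T) K C
  have hTC : adjoin K T ≤ C := adjoin.mono K _ _ fun x hx =>
    ⟨_, Set.mem_image_of_mem _ hx, (hT x hx).orderOf_pos.ne', pow_orderOf_eq_one x⟩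
  exact IsAbelianGalois.of_algHom (inclusion hTC)

theorem adjoin_setOf_isPrimitiveRoot_le {x : Ω} {m n : ℕ} [NeZero n] (hx : IsPrimitiveRoot x n)
    (hmn : m ∣ n) : adjoin K {y : Ω | IsPrimitiveRoot y m} ≤ K⟮x⟯ := by
  refine adjoin_le_iff.2 fun y hy => ?_
  obtain ⟨i, -, rfl⟩ := hx.eq_pow_of_pow_eq_one ((hy.pow_eq_one_iff_dvd n).2 hmn)
  exact pow_mem (mem_adjoin_simple_self K x) i

theorem adjoin_setOf_isPrimitiveRoot {x : Ω} {n : ℕ} [NeZero n] (hx : IsPrimitiveRoot x n) :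
    adjoin K {y : Ω | IsPrimitiveRoot y n} = K⟮x⟯ :=
  le_antisymm (adjoin_setOf_isPrimitiveRoot_le hx dvd_rfl)
    (adjoin_simple_le_iff.2 (subset_adjoin K _ hx))

theorem finrank_adjoin_setOf_isPrimitiveRoot {ℓ : ℕ} (hℓ : ℓ.Prime) (hodd : Odd ℓ)
    {H : Subgroup Ωˣ} {ε m : ℕ} {x : Ωˣ} (hx : IsPrimitiveRoot (x : Ω) (ℓ ^ m)) (hm : 1 ≤ m)
    (hxH : x ∈ H)
    (hε : IsMaxRootExponent ℓ (H ⊓ unitSubgroup (adjoin K {y : Ω | IsPrimitiveRoot y ℓ})) ε) :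
    Module.finrank K (adjoin K {y : Ω | IsPrimitiveRoot y (ℓ ^ m)}) =
      Module.finrank K (adjoin K {y : Ω | IsPrimitiveRoot y ℓ}) * ℓ ^ (m - ε) := by
  have : NeZero (ℓ ^ m) := ⟨pow_ne_zero _ hℓ.ne_zero⟩
  let F := adjoin K {y : Ω | IsPrimitiveRoot y ℓ}
  have hz : IsPrimitiveRoot ((x : Ω) ^ ℓ ^ (m - 1)) ℓ := by
    simpa [Nat.sub_sub_self hm] using isPrimitiveRoot_pow_prime_pow hℓ hx (m - 1)
  have hindex : (unitSubgroup F).relIndex (Subgroup.zpowers x) = ℓ ^ (m - ε) := by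
    rw [← hε.relIndex_zpowers hℓ hx, ← Subgroup.inf_relIndex_right,
      ← Subgroup.inf_relIndex_right (H ⊓ _), inf_right_comm,
      inf_eq_right.2 (Subgroup.zpowers_le.2 hxH), inf_comm]
  have hsup : F ⊔ adjoin K (Units.val '' (Subgroup.zpowers x : Set Ωˣ)) = K⟮(x : Ω)⟯ := by
    have hxS : (x : Ω) ∈ Units.val '' (Subgroup.zpowers x : Set Ωˣ) :=
      Set.mem_image_of_mem _ (Subgroup.mem_zpowers x)
    refine le_antisymm (sup_le ?_ ?_) (adjoin_simple_le_iff.2 ?_)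
    · exact adjoin_setOf_isPrimitiveRoot_le hx (dvd_pow_self ℓ (by omega))
    · exact adjoin_val_le_iff.2 (Subgroup.zpowers_le.2 (mem_adjoin_simple_self K _))
    · exact le_sup_right (a := F) (subset_adjoin K _ hxS)
  rw [adjoin_setOf_isPrimitiveRoot hx, ← hsup, ← finrank_bot_mul_relfinrank le_sup_left,
    relfinrank_sup_adjoin_val hℓ hodd hz (subset_adjoin K _ hz) hindex]

end Cyclotomic

section Radicals

variable {K Ω : Type*} [Field K] [Field Ω] [Algebra K Ω] {ℓ : ℕ}

theorem isMaxRootExponent_unitSubgroup_bot (hK : ¬ ∃ z : K, IsPrimitiveRoot z ℓ) :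
    IsMaxRootExponent ℓ (unitSubgroup (⊥ : IntermediateField K Ω)) 0 where
  exists_mem := ⟨1, by simp, one_mem _⟩
  notMem x hx hxK := by
    obtain ⟨c, hc⟩ := mem_bot.1 hxK
    rw [zero_add, pow_one, ← hc] at hx
    exact hK ⟨c, hx.of_map_of_injective (algebraMap K Ω).injective⟩

theorem isAbelianGalois_adjoin_val_union (hℓ : ℓ.Prime) {W : Subgroup Ωˣ}
    (hW : ∀ w ∈ W, (orderOf w).Coprime ℓ) :
    IsAbelianGalois K
      (adjoin K (Units.val '' (W : Set Ωˣ) ∪ {y : Ω | IsPrimitiveRoot y ℓ})) := by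
  refine isAbelianGalois_adjoin_of_isOfFinOrder ?_
  rintro _ (⟨w, hw, rfl⟩ | hy)
  · have hw0 : orderOf w ≠ 0 := fun h => hℓ.ne_one ((Nat.coprime_zero_left ℓ).1 (h ▸ hW w hw))
    rw [← orderOf_pos_iff, orderOf_units]
    exact Nat.pos_of_ne_zero hw0
  · exact hy.isOfFinOrder hℓ.ne_zero

theorem adjoin_val_union {B W G : Subgroup Ωˣ} [NeZero ℓ] {z : Ωˣ}
    (hz : IsPrimitiveRoot (z : Ω) ℓ) (hzG : z ∈ G) (hBG : B ≤ G) :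
    adjoin K (Units.val '' (B ∪ W ∪ G : Set Ωˣ)) =
      adjoin K (Units.val '' (W : Set Ωˣ) ∪ {y : Ω | IsPrimitiveRoot y ℓ}) ⊔
        adjoin K (Units.val '' (G : Set Ωˣ)) := by
  have hζ : adjoin K {y : Ω | IsPrimitiveRoot y ℓ} ≤ adjoin K (Units.val '' (G : Set Ωˣ)) := by
    rw [adjoin_setOf_isPrimitiveRoot hz, adjoin_simple_le_iff]
    exact subset_adjoin K _ (Set.mem_image_of_mem _ hzG)
  rw [adjoin_union, sup_assoc, sup_eq_right.2 hζ, ← adjoin_union, ← Set.image_union,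
    Set.union_right_comm, Set.union_eq_right.2 (SetLike.coe_subset_coe.2 hBG), Set.union_comm]

end Radicals

theorem stmt10_general {K Ω : Type*} [Field K] [Field Ω] [Algebra K Ω] {ℓ : ℕ} (hℓ : ℓ.Prime)
    (hodd : Odd ℓ) (hK : ¬ ∃ z : K, IsPrimitiveRoot z ℓ) {W G : Subgroup Ωˣ}
    (hW : ∀ w ∈ W, (orderOf w).Coprime ℓ)
    (hKG : unitSubgroup (⊥ : IntermediateField K Ω) ≤ G)
    (hG : ∃ m : ℕ, (unitSubgroup (⊥ : IntermediateField K Ω)).relIndex G = ℓ ^ m)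
    (hζ : ∃ x ∈ unitSubgroup (⊥ : IntermediateField K Ω) ⊔ W ⊔ G, IsPrimitiveRoot (x : Ω) ℓ)
    {τ ε : ℕ}
    (hτ : IsMaxRootExponent ℓ ((unitSubgroup (⊥ : IntermediateField K Ω) ⊔ W ⊔ G) ⊓ unitSubgroup
      (adjoin K (Units.val '' (W : Set Ωˣ) ∪ {y : Ω | IsPrimitiveRoot y ℓ}))) τ)
    (hε : IsMaxRootExponent ℓ ((unitSubgroup (⊥ : IntermediateField K Ω) ⊔ W ⊔ G) ⊓ unitSubgroup
      (adjoin K {y : Ω | IsPrimitiveRoot y ℓ})) ε) :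
    Module.finrank K (adjoin K (Units.val ''
        (unitSubgroup (⊥ : IntermediateField K Ω) ∪ W ∪ G : Set Ωˣ))) *
      (ℓ ^ ε * Module.finrank K (adjoin K {y : Ω | IsPrimitiveRoot y (ℓ ^ τ)})) =
    (unitSubgroup (⊥ : IntermediateField K Ω)).relIndex G *
      Module.finrank K (adjoin K (Units.val '' (W : Set Ωˣ) ∪ {y : Ω | IsPrimitiveRoot y ℓ})) *
      Module.finrank K (adjoin K {y : Ω | IsPrimitiveRoot y ℓ}) := by
  obtain ⟨m, hm⟩ := hG
  obtain ⟨z, hzΓ, hz⟩ := hζ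
  have : NeZero ℓ := ⟨hℓ.ne_zero⟩
  have hΓ : unitSubgroup (⊥ : IntermediateField K Ω) ⊔ W ⊔ G = W ⊔ G := by
    rw [sup_assoc, sup_eq_right.2 (hKG.trans le_sup_right)]
  rw [hΓ] at hzΓ hτ hε
  have hzG : z ∈ G :=
    mem_of_mem_sup_of_pow_eq_one hW hzΓ (IsPrimitiveRoot.coe_units_iff.1 hz).pow_eq_one
  let L := adjoin K (Units.val '' (W : Set Ωˣ) ∪ {y : Ω | IsPrimitiveRoot y ℓ})
  have hζL : {y : Ω | IsPrimitiveRoot y ℓ} ⊆ L := fun y hy => subset_adjoin K _ (Or.inr hy)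
  have hτ1 : 1 ≤ τ := (hτ.mem_iff hℓ (by rwa [pow_one])).1 ⟨hzΓ, hζL hz⟩
  have hετ : ε ≤ τ := by
    obtain ⟨y, hy, hyΓ, hyF⟩ := hε.exists_mem
    exact (hτ.mem_iff hℓ hy).1 ⟨hyΓ, adjoin_le_iff.2 hζL hyF⟩
  have : IsAbelianGalois K L := isAbelianGalois_adjoin_val_union hℓ hW
  have hmain := finrank_sup_adjoin_val_mul hℓ hodd (isMaxRootExponent_unitSubgroup_bot hK) hz
    (hζL hz) hKG hm (hτ.of_sup_inf hW)
  obtain ⟨x, hx, hxΓ, -⟩ := hτ.exists_mem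
  rw [adjoin_val_union hz hzG hKG, finrank_adjoin_setOf_isPrimitiveRoot hℓ hodd hx hτ1 hxΓ hε,
    mul_left_comm (ℓ ^ ε), ← pow_add, Nat.add_sub_cancel' hετ, mul_left_comm, hmain]
  ring

theorem baseUnits_eq_unitSubgroup_bot (K : Type*) [Field K] :
    baseUnits K = unitSubgroup (⊥ : IntermediateField K (AlgebraicClosure K)) := by
  ext x
  rw [mem_unitSubgroup, mem_bot]
  constructor
  · rintro ⟨c, rfl⟩
    exact ⟨c, rfl⟩
  · rintro ⟨c, hc⟩
    have hc0 : c ≠ 0 := fun h => x.ne_zero (by rw [← hc, h, map_zero])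
    exact ⟨Units.mk0 c hc0, Units.ext hc⟩

/-- Theorem 4.3 (second part): let `ℓ` be an odd prime different from `char K` with `ζ_ℓ ∉ K`
and `ζ_ℓ ∈ Γ`. With `τ ≥ 1` the largest integer such that `ζ_{ℓ^τ} ∈ Γ ∩ K(W_ℓ, ζ_ℓ)` and
`ε` the largest integer such that `ζ_{ℓ^ε} ∈ Γ ∩ K(ζ_ℓ)`, we have
`[K(Γ):K] = |Γ_ℓ : K^×| ⬝ [K(W_ℓ, ζ_ℓ):K] / (ℓ^ε ⬝ [K(ζ_{ℓ^τ}) : K(ζ_ℓ)])`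
(stated multiplied out by `ℓ^ε ⬝ [K(ζ_{ℓ^τ}):K]` and `[K(ζ_ℓ):K]`). -/
theorem stmt10 (K : Type*) [Field K] (ℓ : ℕ) (hℓ : ℓ.Prime) (hℓodd : Odd ℓ)
    (hchar : ringChar K ≠ ℓ) (hnK : ¬ ∃ z : K, IsPrimitiveRoot z ℓ)
    (W : Subgroup (AlgebraicClosure K)ˣ)
    (hW : ∃ S : Set (AlgebraicClosure K)ˣ, S.Finite ∧
      (∀ x ∈ S, ∃ q : ℕ, q.Prime ∧ Odd q ∧ q ≠ ℓ ∧ q ≠ ringChar K ∧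
        IsPrimitiveRoot (x : AlgebraicClosure K) q) ∧ W = Subgroup.closure S)
    (Γℓ : Subgroup (AlgebraicClosure K)ˣ) (hΓK : baseUnits K ≤ Γℓ)
    (hidx : ∃ m : ℕ, Subgroup.relIndex (baseUnits K) Γℓ = ℓ ^ m)
    (hζΓ : ∃ x ∈ baseUnits K ⊔ W ⊔ Γℓ, IsPrimitiveRoot (x : AlgebraicClosure K) ℓ)
    (τ : ℕ) (hτ1 : 1 ≤ τ)
    (hτin : ∃ x : (AlgebraicClosure K)ˣ, IsPrimitiveRoot (x : AlgebraicClosure K) (ℓ ^ τ) ∧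
      x ∈ baseUnits K ⊔ W ⊔ Γℓ ∧ (x : AlgebraicClosure K) ∈
        IntermediateField.adjoin K (Units.val '' (W : Set (AlgebraicClosure K)ˣ) ∪ primRoots K ℓ))
    (hτmax : ∀ x : (AlgebraicClosure K)ˣ,
      IsPrimitiveRoot (x : AlgebraicClosure K) (ℓ ^ (τ + 1)) →
      ¬ (x ∈ baseUnits K ⊔ W ⊔ Γℓ ∧ (x : AlgebraicClosure K) ∈
        IntermediateField.adjoin K (Units.val '' (W : Set (AlgebraicClosure K)ˣ) ∪ primRoots K ℓ)))
    (ε : ℕ)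
    (hεin : ∃ x : (AlgebraicClosure K)ˣ, IsPrimitiveRoot (x : AlgebraicClosure K) (ℓ ^ ε) ∧
      x ∈ baseUnits K ⊔ W ⊔ Γℓ ∧ (x : AlgebraicClosure K) ∈
        IntermediateField.adjoin K (primRoots K ℓ))
    (hεmax : ∀ x : (AlgebraicClosure K)ˣ,
      IsPrimitiveRoot (x : AlgebraicClosure K) (ℓ ^ (ε + 1)) →
      ¬ (x ∈ baseUnits K ⊔ W ⊔ Γℓ ∧ (x : AlgebraicClosure K) ∈
        IntermediateField.adjoin K (primRoots K ℓ))) :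
    Module.finrank K (IntermediateField.adjoin K
        (Units.val '' ((baseUnits K ⊔ W ⊔ Γℓ) : Set (AlgebraicClosure K)ˣ))) *
      (ℓ ^ ε * Module.finrank K (IntermediateField.adjoin K (primRoots K (ℓ ^ τ)))) =
    Subgroup.relIndex (baseUnits K) Γℓ *
      Module.finrank K (IntermediateField.adjoin K
        (Units.val '' (W : Set (AlgebraicClosure K)ˣ) ∪ primRoots K ℓ)) *
      Module.finrank K (IntermediateField.adjoin K (primRoots K ℓ)) := by
  obtain ⟨S, -, hS, rfl⟩ := hW
  rw [baseUnits_eq_unitSubgroup_bot] at *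
  refine stmt10_general hℓ hℓodd hnK (fun w => coprime_orderOf_of_mem_closure fun x hx => ?_)
    hΓK hidx hζΓ ⟨hτin, hτmax⟩ ⟨hεin, hεmax⟩
  obtain ⟨q, hq, -, hqℓ, -, hxq⟩ := hS x hx
  rw [← (IsPrimitiveRoot.coe_units_iff.1 hxq).eq_orderOf]
  exact (Nat.coprime_primes hq hℓ).2 hqℓ

end
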